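/- arXiv:1605.05656 — 4 statements merged into one kernel-verified Lean document; each statement's English description precedes it below -/
import Mathlib

section
/- Let Ω be a compact Hausdorff space and let A be a C*-algebra. Suppose that (i) every weak-2-local derivation on A is linear and a derivation, and (ii) every derivation on C(Ω,A) is inner, i.e. for every derivation D : C(Ω,A) → C(Ω,A) there exists Z ∈ C(Ω,A) with D(X) = ZX − XZ for all X. Then every weak-2-local derivation Δ : C(Ω,A) → C(Ω,A) is linear and a derivation. -/
/-- A (complex-linear) derivation on a complex normed algebra. -/
def IsCDerivation {B : Type*} [NonUnitalNormedRing B] [NormedSpace ℂ B] (D : B → B) : Prop :=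
  (∀ x y : B, D (x + y) = D x + D y) ∧ (∀ (c : ℂ) (x : B), D (c • x) = c • D x) ∧
  (∀ x y : B, D (x * y) = D x * y + x * D y)

def IsWeak2LocalDerivation {B : Type*} [NonUnitalNormedRing B] [NormedSpace ℂ B]
    (Δ : B → B) : Prop :=
  ∀ (x y : B) (φ : B →L[ℂ] ℂ), ∃ D : B → B,
    IsCDerivation D ∧ φ (Δ x) = φ (D x) ∧ φ (Δ y) = φ (D y)

/-!
A derivation `D` on `C(Ω, A)` acts fibrewise: `D X t` depends only on `X t`. Indeed, if `X t = 0`,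
then `X = f • W` with `f = √‖X‖`, where `f` and the continuous function `W` both vanish at `t`. By
the Leibniz rule, evaluating `D (X * Y) = D (W * (f • Y))` at `t` gives `D X t * Y t = 0` for every
`Y`. Hence `D X t = 0` as soon as left multiplication on `A` is faithful, which holds if `A` is
unital, and also in any C⋆-algebra, where `a * star a = 0` forces `a = 0`.

Testing against the functionals `φ ∘ eval t` transfers this locality to a weak-2-local derivation
`Δ`, whose fibre maps are weak-2-local derivations on `A`. If these are derivations, so is `Δ`.
-/

section Factorization

variable {E : Type*} [NormedAddCommGroup E] [NormedSpace ℝ E]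

theorem norm_inv_sqrt_norm_smul (v : E) : ‖(√‖v‖)⁻¹ • v‖ = √‖v‖ := by
  rw [norm_smul, norm_inv, Real.norm_of_nonneg (Real.sqrt_nonneg _), inv_mul_eq_div,
    Real.div_sqrt]

theorem sqrt_norm_smul_inv_sqrt_norm_smul (v : E) : √‖v‖ • (√‖v‖)⁻¹ • v = v := by
  rcases eq_or_ne v 0 with rfl | hv
  · simp
  · exact smul_inv_smul₀ (by positivity) v

theorem continuous_inv_sqrt_norm_smul : Continuous fun v : E => (√‖v‖)⁻¹ • v := by
  refine continuous_iff_continuousAt.mpr fun v => ?_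
  rcases eq_or_ne v 0 with rfl | hv
  · have hsqrt : Filter.Tendsto (fun v : E => √‖v‖) (nhds 0) (nhds 0) := by
      simpa using continuous_norm.sqrt.tendsto (0 : E)
    simpa [ContinuousAt] using
      squeeze_zero_norm (fun v : E => (norm_inv_sqrt_norm_smul v).le) hsqrt
  · have hsqrt : √‖v‖ ≠ 0 := by positivity
    exact (continuous_norm.sqrt.continuousAt.inv₀ hsqrt).smul continuousAt_id

theorem exists_continuousMap_smul_eq_and_vanishing {Ω : Type*} [TopologicalSpace Ω]
    (X : C(Ω, E)) :
    ∃ (f : C(Ω, ℝ)) (W : C(Ω, E)), f • W = X ∧ ∀ t, X t = 0 → f t = 0 ∧ W t = 0 := by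
  refine ⟨⟨fun t => √‖X t‖, by fun_prop⟩,
    ⟨fun t => (√‖X t‖)⁻¹ • X t, continuous_inv_sqrt_norm_smul.comp X.continuous⟩, ?_, ?_⟩
  · ext t
    exact sqrt_norm_smul_inv_sqrt_norm_smul (X t)
  · intro t ht
    simp [ht]

end Factorization

theorem IsCDerivation.map_sub {B : Type*} [NonUnitalNormedRing B] [NormedSpace ℂ B] {D : B → B}
    (hD : IsCDerivation D) (x y : B) : D (x - y) = D x - D y :=
  _root_.map_sub (AddMonoidHom.mk' D hD.1) x y

section Fibers

variable {Ω A : Type*} [TopologicalSpace Ω]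

/-- The map induced on the fibre `A` over `t` by a self-map `Δ` of `C(Ω, A)`: elements of `A` are
lifted to constant functions, and the result is evaluated at `t`. -/
def fiberMap [TopologicalSpace A] (Δ : C(Ω, A) → C(Ω, A)) (t : Ω) (a : A) : A :=
  Δ (ContinuousMap.const Ω a) t

variable [CompactSpace Ω] [NonUnitalNormedRing A] [NormedSpace ℂ A]
  {D Δ : C(Ω, A) → C(Ω, A)} {X Y : C(Ω, A)} {t : Ω}

theorem isCDerivation_of_fiberMap (hfib : ∀ X t, Δ X t = fiberMap Δ t (X t))
    (hder : ∀ t, IsCDerivation (fiberMap Δ t)) : IsCDerivation Δ := by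
  refine ⟨fun X Y => ?_, fun c X => ?_, fun X Y => ?_⟩ <;> ext t
  · simpa only [ContinuousMap.add_apply, hfib] using (hder t).1 (X t) (Y t)
  · simpa only [ContinuousMap.smul_apply, hfib] using (hder t).2.1 c (X t)
  · simpa only [ContinuousMap.add_apply, ContinuousMap.mul_apply, hfib] using
      (hder t).2.2 (X t) (Y t)

theorem IsCDerivation.fiberMap (hD : IsCDerivation D) (t : Ω) : IsCDerivation (fiberMap D t) :=
  ⟨fun a b => DFunLike.congr_fun (hD.1 (.const Ω a) (.const Ω b)) t,
    fun c a => DFunLike.congr_fun (hD.2.1 c (.const Ω a)) t,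
    fun a b => DFunLike.congr_fun (hD.2.2 (.const Ω a) (.const Ω b)) t⟩

theorem IsWeak2LocalDerivation.fiberMap (hΔ : IsWeak2LocalDerivation Δ) (t : Ω) :
    IsWeak2LocalDerivation (fiberMap Δ t) := by
  intro a b φ
  obtain ⟨D, hD, ha, hb⟩ := hΔ (.const Ω a) (.const Ω b) (φ.comp (ContinuousMap.evalCLM ℂ t))
  exact ⟨_, hD.fiberMap t, ha, hb⟩

variable [IsScalarTower ℂ A A] [SMulCommClass ℂ A A]

theorem IsCDerivation.apply_mul_apply_eq_zero (hD : IsCDerivation D) (hX : X t = 0)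
    (Y : C(Ω, A)) : D X t * Y t = 0 := by
  obtain ⟨f, W, hfW, hvanish⟩ := exists_continuousMap_smul_eq_and_vanishing X
  obtain ⟨hf, hW⟩ := hvanish t hX
  have hmul : X * Y = W * (f • Y) := by
    ext s
    simp only [← hfW, ContinuousMap.mul_apply, ContinuousMap.smul_apply', smul_mul_assoc,
      mul_smul_comm]
  calc D X t * Y t = D (X * Y) t := by simp [hD.2.2, hX]
    _ = D (W * (f • Y)) t := by rw [hmul]
    _ = 0 := by simp [hD.2.2, hf, hW]

variable [FaithfulSMul A A]

theorem IsCDerivation.apply_congr (hD : IsCDerivation D) (hXY : X t = Y t) : D X t = D Y t := by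
  refine eq_of_smul_eq_smul (α := A) fun a => ?_
  have hann := hD.apply_mul_apply_eq_zero (X := X - Y) (t := t) (by simp [hXY]) (.const Ω a)
  simpa [hD.map_sub, sub_mul, sub_eq_zero] using hann

theorem IsWeak2LocalDerivation.apply_congr (hΔ : IsWeak2LocalDerivation Δ) (hXY : X t = Y t) :
    Δ X t = Δ Y t := by
  refine (SeparatingDual.eq_iff_forall_dual_eq (R := ℂ)).mpr fun φ => ?_
  obtain ⟨D, hD, hX, hY⟩ := hΔ X Y (φ.comp (ContinuousMap.evalCLM ℂ t))
  calc φ (Δ X t) = φ (D X t) := hX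
    _ = φ (D Y t) := by rw [hD.apply_congr hXY]
    _ = φ (Δ Y t) := hY.symm

end Fibers

theorem stmt0_general {Ω A : Type*} [TopologicalSpace Ω] [CompactSpace Ω]
    [NonUnitalNormedRing A] [NormedSpace ℂ A] [IsScalarTower ℂ A A] [SMulCommClass ℂ A A]
    [FaithfulSMul A A]
    (hA : ∀ Δ : A → A, IsWeak2LocalDerivation Δ → IsCDerivation Δ)
    (Δ : C(Ω, A) → C(Ω, A)) (hΔ : IsWeak2LocalDerivation Δ) :
    IsCDerivation Δ :=
  isCDerivation_of_fiberMap (fun _ _ => hΔ.apply_congr rfl) fun t => hA _ (hΔ.fiberMap t)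

theorem stmt0 {Ω A : Type*} [TopologicalSpace Ω] [CompactSpace Ω] [T2Space Ω]
    [NormedRing A] [StarRing A] [CStarRing A] [NormedAlgebra ℂ A] [CompleteSpace A]
    [StarModule ℂ A]
    (hA : ∀ Δ : A → A, IsWeak2LocalDerivation Δ → IsCDerivation Δ)
    (hInner : ∀ D : C(Ω, A) → C(Ω, A), IsCDerivation D →
      ∃ Z : C(Ω, A), ∀ X, D X = Z * X - X * Z)
    (Δ : C(Ω, A) → C(Ω, A)) (hΔ : IsWeak2LocalDerivation Δ) :
    IsCDerivation Δ :=
  stmt0_general hA Δ hΔ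
end

section
/- Let Ω be a compact Hausdorff space and let A be a C*-algebra such that every derivation on C(Ω,A) is inner. If Δ : C(Ω,A) → C(Ω,A) is a weak-2-local derivation, then for every t ∈ Ω and every X ∈ C(Ω,A) one has Δ(X)(t) = Δ(â)(t), where a = X(t) and â ∈ C(Ω,A) denotes the constant function with value a. -/
/-!
If `X` vanishes at `t`, then so do `√‖X(·)‖` and `(√‖X(·)‖)⁻¹ • X(·)`, where `0⁻¹ = 0`, and `X` is
their product; the second factor is continuous because its norm is `√‖X(·)‖`. By the Leibniz rule
`D X` vanishes at `t` for every derivation `D`, so `D X t` depends only on `X t`. Testing against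
the functionals `φ ∘ (evaluation at t)`, with `φ` in the dual of `A`, transfers this from
derivations to weak-2-local derivations.
-/

theorem norm_inv_sqrt_norm_smul_s1 {E : Type*} [SeminormedAddCommGroup E] [NormedSpace ℝ E]
    (x : E) : ‖(√‖x‖)⁻¹ • x‖ = √‖x‖ := by
  rw [norm_smul, norm_inv, Real.norm_of_nonneg (Real.sqrt_nonneg _), inv_mul_eq_div,
    Real.div_sqrt]

theorem continuous_inv_sqrt_norm_smul_s1 {E : Type*} [NormedAddCommGroup E] [NormedSpace ℝ E] :
    Continuous fun x : E ↦ (√‖x‖)⁻¹ • x := by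
  refine continuous_iff_continuousAt.2 fun x ↦ ?_
  rcases eq_or_ne x 0 with rfl | hx
  · have h_sqrt : Filter.Tendsto (fun x : E ↦ √‖x‖) (nhds 0) (nhds 0) := by
      simpa using (continuous_norm (E := E)).sqrt.tendsto 0
    simpa [ContinuousAt, tendsto_zero_iff_norm_tendsto_zero (f := fun x : E ↦ (√‖x‖)⁻¹ • x),
      norm_inv_sqrt_norm_smul_s1] using h_sqrt
  · have h_ne : √‖x‖ ≠ 0 := (Real.sqrt_pos.2 (norm_pos_iff.2 hx)).ne'
    exact (continuous_norm.sqrt.continuousAt.inv₀ h_ne).smul continuousAt_id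

theorem exists_mul_eq_and_forall_eq_zero {Ω A : Type*} [TopologicalSpace Ω] [NormedRing A]
    [NormedAlgebra ℝ A] (X : C(Ω, A)) :
    ∃ F Y : C(Ω, A), F * Y = X ∧ ∀ t, X t = 0 → F t = 0 ∧ Y t = 0 := by
  let F : C(Ω, A) :=
    ⟨fun t ↦ algebraMap ℝ A √‖X t‖, (continuous_algebraMap ℝ A).comp X.continuous.norm.sqrt⟩
  let Y : C(Ω, A) := ⟨fun t ↦ (√‖X t‖)⁻¹ • X t, continuous_inv_sqrt_norm_smul_s1.comp X.continuous⟩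
  have h_mul : F * Y = X := by
    ext t
    change algebraMap ℝ A √‖X t‖ * (√‖X t‖)⁻¹ • X t = X t
    rcases eq_or_ne (X t) 0 with hX | hX
    · simp [hX]
    · have h_ne : √‖X t‖ ≠ 0 := (Real.sqrt_pos.2 (norm_pos_iff.2 hX)).ne'
      rw [← Algebra.smul_def, smul_inv_smul₀ h_ne]
  exact ⟨F, Y, h_mul, fun t hX ↦ by simp [F, Y, hX]⟩

section PointEvaluation

variable {Ω A : Type*} [TopologicalSpace Ω] [CompactSpace Ω] [NormedRing A] [NormedAlgebra ℂ A]
  {D : C(Ω, A) → C(Ω, A)}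

theorem IsCDerivation.apply_eq_zero_of_apply_eq_zero (hD : IsCDerivation D) {X : C(Ω, A)} {t : Ω}
    (hX : X t = 0) : D X t = 0 := by
  obtain ⟨F, Y, rfl, h_zero⟩ := exists_mul_eq_and_forall_eq_zero X
  obtain ⟨hF, hY⟩ := h_zero t hX
  simp [hD.2.2 F Y, hF, hY]

theorem IsCDerivation.apply_eq_of_apply_eq (hD : IsCDerivation D) {X Y : C(Ω, A)} {t : Ω}
    (h : X t = Y t) : D X t = D Y t := by
  have h_sub : D (X - Y) t = 0 := hD.apply_eq_zero_of_apply_eq_zero (sub_eq_zero.2 h)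
  rwa [hD.map_sub, ContinuousMap.sub_apply, sub_eq_zero] at h_sub

end PointEvaluation

theorem IsWeak2LocalDerivation.map_eq_of_forall_isCDerivation {B E : Type*}
    [NonUnitalNormedRing B] [NormedSpace ℂ B] [AddCommGroup E] [TopologicalSpace E] [Module ℂ E]
    [SeparatingDual ℂ E] {Δ : B → B} (hΔ : IsWeak2LocalDerivation Δ) (e : B →L[ℂ] E) {x y : B}
    (h : ∀ D : B → B, IsCDerivation D → e (D x) = e (D y)) : e (Δ x) = e (Δ y) := by
  refine (SeparatingDual.eq_iff_forall_dual_eq (R := ℂ)).2 fun φ ↦ ?_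
  obtain ⟨D, hD, hx, hy⟩ := hΔ x y (φ.comp e)
  calc φ (e (Δ x)) = φ (e (D x)) := hx
    _ = φ (e (D y)) := congrArg φ (h D hD)
    _ = φ (e (Δ y)) := hy.symm

theorem stmt1_general {Ω A : Type*} [TopologicalSpace Ω] [CompactSpace Ω] [NormedRing A]
    [NormedAlgebra ℂ A] (Δ : C(Ω, A) → C(Ω, A)) (hΔ : IsWeak2LocalDerivation Δ) (t : Ω)
    (X : C(Ω, A)) : Δ X t = Δ (ContinuousMap.const Ω (X t)) t :=
  hΔ.map_eq_of_forall_isCDerivation (ContinuousMap.evalCLM ℂ t)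
    fun _ hD ↦ hD.apply_eq_of_apply_eq (ContinuousMap.const_apply (X t) t).symm

theorem stmt1 {Ω A : Type*} [TopologicalSpace Ω] [CompactSpace Ω] [T2Space Ω]
    [NormedRing A] [StarRing A] [CStarRing A] [NormedAlgebra ℂ A] [CompleteSpace A]
    [StarModule ℂ A]
    (hInner : ∀ D : C(Ω, A) → C(Ω, A), IsCDerivation D →
      ∃ Z : C(Ω, A), ∀ X, D X = Z * X - X * Z)
    (Δ : C(Ω, A) → C(Ω, A)) (hΔ : IsWeak2LocalDerivation Δ) :
    ∀ (t : Ω) (X : C(Ω, A)), Δ X t = Δ (ContinuousMap.const Ω (X t)) t :=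
  stmt1_general Δ hΔ
end

section
/- Let D : A → A be a derivation on a C*-algebra A. Then D(c) = 0 for every element c of the center Z(A) = {c ∈ A : ca = ac for all a ∈ A}. -/
/-!
A derivation `D` preserves the center `Z`, so for every character `φ` of the commutative
C⋆-algebra `Z` the composition `φ ∘ D` is a point derivation of `Z` at `φ`. Such a functional
vanishes on products of two elements of `ker φ`, and these products span `ker φ`, because a
self-adjoint `a` is `p ^ 2 - q ^ 2`, where `p` and `q` are the square roots of the positive and
negative parts of `a` and `φ p = φ q = 0` whenever `φ a = 0`. Hence `φ ∘ D = 0`, and characters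
separate the points of `Z`.
-/

theorem exists_eq_mul_self_sub_mul_self_of_isSelfAdjoint {A : Type*} [NonUnitalRing A] [StarRing A]
    [TopologicalSpace A] [Module ℝ A] [IsScalarTower ℝ A A] [SMulCommClass ℝ A A]
    [NonUnitalContinuousFunctionalCalculus ℝ A IsSelfAdjoint] {a : A} (ha : IsSelfAdjoint a) :
    ∃ p q : A, a = p * p - q * q ∧ p * q = 0 := by
  refine ⟨cfcₙ (fun x : ℝ ↦ √x) a, cfcₙ (fun x : ℝ ↦ √(-x)) a, ?_, ?_⟩
  · have sqrt_sub_sqrt (x : ℝ) : √x * √x - √(-x) * √(-x) = x := by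
      rcases le_total 0 x with hx | hx
      · simp [Real.sqrt_eq_zero_of_nonpos (neg_nonpos.2 hx), Real.mul_self_sqrt hx]
      · simp [Real.sqrt_eq_zero_of_nonpos hx, Real.mul_self_sqrt (neg_nonneg.2 hx)]
    rw [← cfcₙ_mul .., ← cfcₙ_mul .., ← cfcₙ_sub ..]
    simp only [sqrt_sub_sqrt, cfcₙ_id' ℝ a]
  · have sqrt_mul_sqrt (x : ℝ) : √x * √(-x) = 0 := by
      rcases le_total 0 x with hx | hx
      · simp [Real.sqrt_eq_zero_of_nonpos (neg_nonpos.2 hx)]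
      · simp [Real.sqrt_eq_zero_of_nonpos hx]
    rw [← cfcₙ_mul ..]
    simp only [sqrt_mul_sqrt, cfcₙ_const_zero]

/-- A point derivation of `A` at a functional `φ` (in practice a character), with values in a
complex vector space `M` on which `A` acts on both sides through `φ`. -/
def IsPointDerivation {A M : Type*} [NonUnitalRing A] [Module ℂ A] [AddCommGroup M] [Module ℂ M]
    (φ : A → ℂ) (d : A →ₗ[ℂ] M) : Prop :=
  ∀ a b : A, d (a * b) = φ a • d b + φ b • d a

namespace IsPointDerivation

open scoped ComplexStarModule

variable {A M : Type*} [NonUnitalCStarAlgebra A] [AddCommGroup M] [Module ℂ M]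
  {φ : A →⋆ₙₐ[ℂ] ℂ} {d : A →ₗ[ℂ] M}

theorem apply_eq_zero_of_isSelfAdjoint (hd : IsPointDerivation φ d) {a : A}
    (ha : IsSelfAdjoint a) (hφa : φ a = 0) : d a = 0 := by
  obtain ⟨p, q, rfl, hpq⟩ := exists_eq_mul_self_sub_mul_self_of_isSelfAdjoint ha
  have hφ_mul : φ p * φ q = 0 := by rw [← map_mul, hpq, map_zero]
  have hφ_sq : φ p * φ p = φ q * φ q := by rwa [map_sub, map_mul, map_mul, sub_eq_zero] at hφa
  obtain ⟨hφp, hφq⟩ : φ p = 0 ∧ φ q = 0 := by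
    rcases mul_eq_zero.1 hφ_mul with h | h <;> simp_all
  simp only [map_sub, hd p p, hd q q, hφp, hφq, zero_smul, add_zero, sub_zero]

theorem apply_eq_zero_of_map_eq_zero (hd : IsPointDerivation φ d) {a : A}
    (hφa : φ a = 0) : d a = 0 := by
  have hφ_star : φ (star a) = 0 := by rw [map_star, hφa, star_zero]
  have hφ_re : φ (ℜ a) = 0 := by
    rw [realPart_apply_coe, ← Complex.coe_smul, map_smul, map_add, hφa, hφ_star, add_zero,
      smul_zero]
  have hφ_im : φ (ℑ a) = 0 := by
    rw [imaginaryPart_apply_coe, ← Complex.coe_smul, map_smul, map_smul, map_sub, hφa, hφ_star,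
      sub_zero, smul_zero, smul_zero]
  have hd_re : d (ℜ a) = 0 := hd.apply_eq_zero_of_isSelfAdjoint (ℜ a).2 hφ_re
  have hd_im : d (ℑ a) = 0 := hd.apply_eq_zero_of_isSelfAdjoint (ℑ a).2 hφ_im
  rw [← realPart_add_I_smul_imaginaryPart a, map_add, map_smul, hd_re, hd_im, smul_zero, add_zero]

theorem eq_zero (hd : IsPointDerivation φ d) : d = 0 := by
  ext a
  by_cases hφa : φ a = 0
  · exact hd.apply_eq_zero_of_map_eq_zero hφa
  · -- Without a unit, `a * a - φ a • a` replaces `a - φ a • 1` as an element of `ker φ`.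
    have hker : d (a * a - φ a • a) = 0 := hd.apply_eq_zero_of_map_eq_zero (by simp)
    have hsmul : φ a • d a = 0 := by
      rwa [map_sub, hd a a, map_smul, add_sub_cancel_right] at hker
    exact (smul_eq_zero.1 hsmul).resolve_left hφa

end IsPointDerivation

theorem eq_zero_of_forall_character_eq_zero {Z : Type*} [NonUnitalCommCStarAlgebra Z] {z : Z}
    (hz : ∀ φ : Z →⋆ₙₐ[ℂ] ℂ, φ z = 0) : z = 0 := by
  suffices h : (z : Unitization ℂ Z) = 0 from Unitization.inr_injective h
  apply (gelfandTransform_isometry (Unitization ℂ Z)).injective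
  ext ψ
  have hψ : ψ (z : Unitization ℂ Z) = 0 :=
    hz ((ψ : Unitization ℂ Z →⋆ₙₐ[ℂ] ℂ).comp (Unitization.inrNonUnitalStarAlgHom ℂ Z))
  simpa using hψ

noncomputable instance nonUnitalCommCStarAlgebraCenter {A : Type*} [NonUnitalCStarAlgebra A] :
    NonUnitalCommCStarAlgebra (NonUnitalStarSubalgebra.center ℂ A) :=
  { NonUnitalStarSubalgebra.nonUnitalCStarAlgebra (NonUnitalStarSubalgebra.center ℂ A)
      (h_closed := by
        rw [NonUnitalStarSubalgebra.coe_center, ← Set.centralizer_univ]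
        exact Set.isClosed_centralizer _) with
    mul_comm := mul_comm }

namespace IsCDerivation

theorem map_mem_center {B : Type*} [NonUnitalNormedRing B] [NormedSpace ℂ B] {D : B → B}
    (hD : IsCDerivation D) {c : B} (hc : c ∈ Set.center B) : D c ∈ Set.center B := by
  obtain ⟨-, -, hmul⟩ := hD
  rw [Semigroup.mem_center_iff] at hc ⊢
  intro b
  have h : D (b * c) = D (c * b) := congrArg D (hc b)
  rw [hmul, hmul, hc (D b), add_comm] at h
  exact add_right_cancel h

theorem restrict {B S : Type*} [NonUnitalNormedRing B] [NormedSpace ℂ B] [SetLike S B]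
    [NonUnitalSubringClass S B] [SMulMemClass S ℂ B] {D : B → B} (hD : IsCDerivation D) (s : S)
    (hs : ∀ x ∈ s, D x ∈ s) : IsCDerivation fun x : s ↦ (⟨D x, hs x x.2⟩ : s) :=
  ⟨fun x y ↦ Subtype.ext (hD.1 x y), fun k x ↦ Subtype.ext (hD.2.1 k x),
    fun x y ↦ Subtype.ext (hD.2.2 x y)⟩

theorem character_apply_eq_zero {A : Type*} [NonUnitalCStarAlgebra A] {D : A → A}
    (hD : IsCDerivation D) (φ : A →⋆ₙₐ[ℂ] ℂ) (a : A) : φ (D a) = 0 := by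
  obtain ⟨hadd, hsmul, hmul⟩ := hD
  let d : A →ₗ[ℂ] ℂ :=
    { toFun := fun x ↦ φ (D x)
      map_add' := fun x y ↦ by rw [hadd, map_add]
      map_smul' := fun k x ↦ by rw [hsmul, map_smul, RingHom.id_apply] }
  have hd : IsPointDerivation φ d := fun x y ↦ by
    change φ (D (x * y)) = φ x * φ (D y) + φ y * φ (D x)
    rw [hmul, map_add, map_mul, map_mul]
    ring
  exact LinearMap.congr_fun hd.eq_zero a

theorem apply_eq_zero {Z : Type*} [NonUnitalCommCStarAlgebra Z] {D : Z → Z}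
    (hD : IsCDerivation D) (z : Z) : D z = 0 :=
  eq_zero_of_forall_character_eq_zero fun φ ↦ hD.character_apply_eq_zero φ z

end IsCDerivation

theorem stmt4_general {A : Type*} [NonUnitalCStarAlgebra A] (D : A → A) (hD : IsCDerivation D)
    (c : A) (hc : ∀ a : A, c * a = a * c) : D c = 0 := by
  let Z := NonUnitalStarSubalgebra.center ℂ A
  have hcZ : c ∈ Z := NonUnitalStarSubalgebra.mem_center_iff.2 fun a ↦ (hc a).symm
  have hDZ : IsCDerivation fun z : Z ↦ (⟨D z, hD.map_mem_center z.2⟩ : Z) :=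
    hD.restrict Z fun _ ↦ hD.map_mem_center
  exact congrArg Subtype.val (hDZ.apply_eq_zero ⟨c, hcZ⟩)

theorem stmt4 {A : Type*}
    [NormedRing A] [StarRing A] [CStarRing A] [NormedAlgebra ℂ A] [CompleteSpace A]
    [StarModule ℂ A]
    (D : A → A) (hD : IsCDerivation D) (c : A) (hc : ∀ a : A, c * a = a * c) :
    D c = 0 :=
  letI : CStarAlgebra A := {}
  stmt4_general D hD c hc
end

section
/- Let Ω be a compact Hausdorff space and let B be a C*-algebra satisfying: (a) every 2-local derivation on B is linear and a derivation; and (b) every derivation D : C(Ω,B) → C(Ω,B) satisfies D(X)(t) = D(â)(t) for every X ∈ C(Ω,B) and t ∈ Ω, where a = X(t) and â denotes the constant function with value a. Then every 2-local derivation on C(Ω,B) is linear and a derivation. -/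
def Is2LocalDerivation {B : Type*} [NonUnitalNormedRing B] [NormedSpace ℂ B]
    (Δ : B → B) : Prop :=
  ∀ x y : B, ∃ D : B → B, IsCDerivation D ∧ Δ x = D x ∧ Δ y = D y

/-!
Fix a point `t`. Including constants and evaluating at `t` exhibits `B` as a retract of `C(Ω, B)`,
so a 2-local derivation `Δ` of `C(Ω, B)` induces the 2-local derivation `a ↦ Δ(â)(t)` of `B`, which
is a derivation by (a). An identity `D x = D y` observed at `t` for every derivation `D` passes to
`Δ`, because `Δ` agrees at `x` and `y` with one derivation; by (b), evaluation at `t` therefore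
intertwines `Δ` with the induced derivation. Evaluations separate the points of `C(Ω, B)`, so the
derivation identities for `Δ` can be checked after evaluating.
-/

section Retract

variable {A B : Type*} [NonUnitalNormedRing A] [NormedSpace ℂ A]
  [NonUnitalNormedRing B] [NormedSpace ℂ B]

theorem IsCDerivation.comp_of_leftInverse {D : A → A} (hD : IsCDerivation D) {π : A →ₙₐ[ℂ] B}
    {ι : B →ₙₐ[ℂ] A} (hπι : Function.LeftInverse π ι) : IsCDerivation (π ∘ D ∘ ι) := by
  obtain ⟨map_add_D, map_smul_D, leibniz_D⟩ := hD
  refine ⟨fun a b => ?_, fun c a => ?_, fun a b => ?_⟩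
  · simp only [Function.comp_apply, map_add, map_add_D]
  · simp only [Function.comp_apply, map_smul, map_smul_D]
  · simp only [Function.comp_apply, map_mul, map_add, leibniz_D, hπι a, hπι b]

theorem Is2LocalDerivation.comp_of_leftInverse {Δ : A → A} (hΔ : Is2LocalDerivation Δ)
    {π : A →ₙₐ[ℂ] B} {ι : B →ₙₐ[ℂ] A} (hπι : Function.LeftInverse π ι) :
    Is2LocalDerivation (π ∘ Δ ∘ ι) := by
  intro a b
  obtain ⟨D, hD, hDa, hDb⟩ := hΔ (ι a) (ι b)
  exact ⟨π ∘ D ∘ ι, hD.comp_of_leftInverse hπι, congrArg π hDa, congrArg π hDb⟩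

theorem Is2LocalDerivation.map_eq_map {γ : Type*} {Δ : A → A} (hΔ : Is2LocalDerivation Δ)
    {f : A → γ} {x y : A} (hf : ∀ D : A → A, IsCDerivation D → f (D x) = f (D y)) :
    f (Δ x) = f (Δ y) := by
  obtain ⟨D, hD, hDx, hDy⟩ := hΔ x y
  rw [hDx, hDy, hf D hD]

theorem IsCDerivation.of_separating {κ : Type*} {E : κ → Type*}
    [∀ i, NonUnitalNormedRing (E i)] [∀ i, NormedSpace ℂ (E i)] {π : ∀ i, A →ₙₐ[ℂ] E i}
    (hπ : ∀ ⦃x y : A⦄, (∀ i, π i x = π i y) → x = y) {δ : ∀ i, E i → E i}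
    (hδ : ∀ i, IsCDerivation (δ i)) {Δ : A → A}
    (hΔ : ∀ i, Function.Semiconj (π i) Δ (δ i)) : IsCDerivation Δ := by
  refine ⟨fun x y => hπ fun i => ?_, fun c x => hπ fun i => ?_, fun x y => hπ fun i => ?_⟩
  · simp only [map_add, (hΔ i).eq, (hδ i).1]
  · simp only [map_smul, (hΔ i).eq, (hδ i).2.1]
  · simp only [map_add, map_mul, (hΔ i).eq, (hδ i).2.2]

end Retract

section ContinuousMap

variable (R : Type*) {Ω B : Type*} [TopologicalSpace Ω] [Monoid R]
  [NonUnitalNonAssocSemiring B] [TopologicalSpace B] [IsTopologicalSemiring B]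
  [DistribMulAction R B] [ContinuousConstSMul R B]

variable (Ω B) in
/-- The inclusion of `B` into `C(Ω, B)` as the constant functions, written `a ↦ â` on paper; it is a
non-unital homomorphism so that `B` need not have a unit. -/
def constNonUnitalAlgHom : B →ₙₐ[R] C(Ω, B) where
  toFun := ContinuousMap.const Ω
  map_smul' _ _ := rfl
  map_zero' := rfl
  map_add' _ _ := rfl
  map_mul' _ _ := rfl

/-- Evaluation at `t` as a homomorphism `C(Ω, B) → B`, non-unital so that `B` need not have a unit;
a left inverse of `constNonUnitalAlgHom`. -/
def evalNonUnitalAlgHom (t : Ω) : C(Ω, B) →ₙₐ[R] B where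
  toFun X := X t
  map_smul' _ _ := rfl
  map_zero' := rfl
  map_add' _ _ := rfl
  map_mul' _ _ := rfl

theorem leftInverse_evalNonUnitalAlgHom (t : Ω) :
    Function.LeftInverse (evalNonUnitalAlgHom R t) (constNonUnitalAlgHom R Ω B) :=
  fun _ => rfl

end ContinuousMap

theorem stmt16_general {Ω B : Type*} [TopologicalSpace Ω] [CompactSpace Ω]
    [NonUnitalNormedRing B] [NormedSpace ℂ B]
    (ha : ∀ Δ : B → B, Is2LocalDerivation Δ → IsCDerivation Δ)
    (hb : ∀ D : C(Ω, B) → C(Ω, B), IsCDerivation D →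
      ∀ (X : C(Ω, B)) (t : Ω), D X t = D (ContinuousMap.const Ω (X t)) t)
    (Δ : C(Ω, B) → C(Ω, B)) (hΔ : Is2LocalDerivation Δ) :
    IsCDerivation Δ := by
  have induced (t : Ω) :
      IsCDerivation (evalNonUnitalAlgHom ℂ t ∘ Δ ∘ constNonUnitalAlgHom ℂ Ω B) :=
    ha _ (hΔ.comp_of_leftInverse (leftInverse_evalNonUnitalAlgHom ℂ t))
  have semiconj (t : Ω) : Function.Semiconj (evalNonUnitalAlgHom ℂ t) Δ
      (evalNonUnitalAlgHom ℂ t ∘ Δ ∘ constNonUnitalAlgHom ℂ Ω B) :=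
    fun X => hΔ.map_eq_map (f := evalNonUnitalAlgHom ℂ t) fun D hD => hb D hD X t
  exact .of_separating (fun _ _ => ContinuousMap.ext) induced semiconj

theorem stmt16 {Ω B : Type*} [TopologicalSpace Ω] [CompactSpace Ω] [T2Space Ω]
    [NormedRing B] [StarRing B] [CStarRing B] [NormedAlgebra ℂ B] [CompleteSpace B]
    [StarModule ℂ B]
    (ha : ∀ Δ : B → B, Is2LocalDerivation Δ → IsCDerivation Δ)
    (hb : ∀ D : C(Ω, B) → C(Ω, B), IsCDerivation D →
      ∀ (X : C(Ω, B)) (t : Ω), D X t = D (ContinuousMap.const Ω (X t)) t)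
    (Δ : C(Ω, B) → C(Ω, B)) (hΔ : Is2LocalDerivation Δ) :
    IsCDerivation Δ := by
  exact stmt16_general ha hb Δ hΔ
end
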